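/- arXiv:2401.02381 — 9 statements merged into one kernel-verified Lean document; each statement's English description precedes it below -/
import Mathlib

section
/- If a total cost function is 2-partition ordered minimizable, then for every integer q ≥ 1 it is q-partition ordered minimizable; that is, for every finite multiset Ω of real numbers and every partition P of Ω into q nonempty multisets there exists a pairwise ordered partition P' of Ω whose multiset of part cardinalities equals that of P and which satisfies TC(P') ≤ TC(P). -/
/-- Two multisets of reals are pairwise ordered iff every element of one is
less than or equal to every element of the other. -/
def PairwiseOrdered (A B : Multiset ℝ) : Prop :=
  (∀ a ∈ A, ∀ b ∈ B, a ≤ b) ∨ (∀ a ∈ A, ∀ b ∈ B, b ≤ a)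

/-- A cost function `C` on finite multisets of reals is 2-partition ordered
minimizable iff for every partition of a multiset `Ω = A + B` into two nonempty
multisets there exist pairwise ordered multisets `L`, `R` with `L + R = Ω`,
the same multiset of cardinalities, and no larger total cost. -/
def TwoPartitionOrderedMinimizable (C : Multiset ℝ → ℝ) : Prop :=
  ∀ A B : Multiset ℝ, A ≠ 0 → B ≠ 0 →
    ∃ L R : Multiset ℝ, L + R = A + B ∧ PairwiseOrdered L R ∧
      ({Multiset.card L, Multiset.card R} : Multiset ℕ) =
        {Multiset.card A, Multiset.card B} ∧
      C L + C R ≤ C A + C B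

def LOrd {α : Type} [LinearOrder α] (A B : Multiset α) : Prop :=
  (∀ a ∈ A, ∀ b ∈ B, a ≤ b) ∨ (∀ a ∈ A, ∀ b ∈ B, b ≤ a)

noncomputable def hull {α : Type} [LinearOrder α] [Fintype α] (A : Multiset α) : Finset α :=
  Finset.univ.filter (fun x => (∃ a ∈ A, a ≤ x) ∧ (∃ b ∈ A, x ≤ b))

theorem mem_hull {α : Type} [LinearOrder α] [Fintype α] (A : Multiset α) (x : α) :
    x ∈ hull A ↔ (∃ a ∈ A, a ≤ x) ∧ (∃ b ∈ A, x ≤ b) := by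
  simp [hull]

theorem list_not_pairwise {β : Type} (r : β → β → Prop) (l : List β) (h : ¬ l.Pairwise r) :
    ∃ a b, ∃ l' : List β, (l : Multiset β) = a ::ₘ b ::ₘ (l' : Multiset β) ∧ ¬ r a b := by
  induction l with
  | nil => simp at h
  | cons x t ih =>
    by_cases ht : t.Pairwise r
    · have : ∃ b ∈ t, ¬ r x b := by
        by_contra hc
        push Not at hc
        exact h (List.pairwise_cons.2 ⟨hc, ht⟩)
      obtain ⟨b, hb, hr⟩ := this
      obtain ⟨s, hs⟩ := Multiset.exists_cons_of_mem (show b ∈ (t : Multiset β) from hb)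
      refine ⟨x, b, s.toList, ?_, hr⟩
      rw [← Multiset.cons_coe, hs, Multiset.coe_toList]
    · obtain ⟨a, b, l', h1, h2⟩ := ih ht
      refine ⟨a, b, x :: l', ?_, h2⟩
      rw [← Multiset.cons_coe, h1, ← Multiset.cons_coe, Multiset.cons_swap x a,
        Multiset.cons_swap x b]

theorem hull_lt {α : Type} [LinearOrder α] [Fintype α] (A B L R : Multiset α)
    (hs : L + R = A + B) (hn : (A + B).Nodup) (ho : ∀ a ∈ L, ∀ b ∈ R, a ≤ b)
    (hno : ¬ LOrd A B) :
    (hull L).card + (hull R).card < (hull A).card + (hull B).card := by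
  have hd : Disjoint (hull L) (hull R) := by
    rw [Finset.disjoint_left]
    intro x hx hy
    rw [mem_hull] at hx hy
    obtain ⟨-, l, hl, hl'⟩ := hx
    obtain ⟨⟨r, hr, hr'⟩, -⟩ := hy
    have : l = r := le_antisymm (ho l hl r hr) (hr'.trans hl')
    rw [← hs, Multiset.nodup_add] at hn
    exact Multiset.disjoint_left.1 hn.2.2 hl (this ▸ hr)
  have hp : ∃ p, p ∈ hull A ∧ p ∈ hull B := by
    unfold LOrd at hno
    push Not at hno
    obtain ⟨⟨a, ha, b, hb, h1⟩, ⟨a', ha', b', hb', h2⟩⟩ := hno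
    simp only [mem_hull]
    rcases le_total a' b with h | h
    · exact ⟨b, ⟨⟨a', ha', h⟩, ⟨a, ha, h1.le⟩⟩, ⟨b, hb, le_rfl⟩, ⟨b, hb, le_rfl⟩⟩
    · exact ⟨a', ⟨⟨a', ha', le_rfl⟩, ⟨a', ha', le_rfl⟩⟩, ⟨b, hb, h⟩, ⟨b', hb', h2.le⟩⟩
  obtain ⟨p, hpA, hpB⟩ := hp
  have key : ∀ x, (∃ a ∈ A + B, a ≤ x) → (∃ b ∈ A + B, x ≤ b) → x ∈ hull A ∪ hull B := by
    rintro x ⟨a, ha, hax⟩ ⟨b, hb, hxb⟩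
    rw [Finset.mem_union]
    rw [mem_hull] at *
    rw [mem_hull]
    obtain ⟨⟨p1, hp1, hp1'⟩, ⟨p2, hp2, hp2'⟩⟩ := hpA
    obtain ⟨⟨p3, hp3, hp3'⟩, ⟨p4, hp4, hp4'⟩⟩ := hpB
    rw [Multiset.mem_add] at ha hb
    rcases le_total x p with h | h
    · rcases ha with ha | ha
      · exact Or.inl ⟨⟨a, ha, hax⟩, ⟨p2, hp2, h.trans hp2'⟩⟩
      · exact Or.inr ⟨⟨a, ha, hax⟩, ⟨p4, hp4, h.trans hp4'⟩⟩
    · rcases hb with hb | hb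
      · exact Or.inl ⟨⟨p1, hp1, hp1'.trans h⟩, ⟨b, hb, hxb⟩⟩
      · exact Or.inr ⟨⟨p3, hp3, hp3'.trans h⟩, ⟨b, hb, hxb⟩⟩
  have hsub : hull L ∪ hull R ⊆ hull A ∪ hull B := by
    intro x hx
    rw [Finset.mem_union, mem_hull, mem_hull] at hx
    rw [← hs] at key
    rcases hx with ⟨⟨a, ha, h⟩, ⟨b, hb, h'⟩⟩ | ⟨⟨a, ha, h⟩, ⟨b, hb, h'⟩⟩ <;>
      exact key x ⟨a, by simp [ha], h⟩ ⟨b, by simp [hb], h'⟩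
  have h1 := Finset.card_le_card hsub
  rw [Finset.card_union_of_disjoint hd] at h1
  have h2 := Finset.card_union_add_card_inter (hull A) (hull B)
  have h3 : 0 < (hull A ∩ hull B).card :=
    Finset.card_pos.2 ⟨p, Finset.mem_inter.2 ⟨hpA, hpB⟩⟩
  omega

theorem lift_split {α : Type} [LinearOrder α] (v : α → ℝ) (hv : Monotone v)
    (M : Multiset α) (L R : Multiset ℝ) (h : L + R = M.map v)
    (ho : ∀ a ∈ L, ∀ b ∈ R, a ≤ b) :
    ∃ L' R' : Multiset α, L' + R' = M ∧ L'.map v = L ∧ R'.map v = R ∧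
      ∀ a ∈ L', ∀ b ∈ R', a ≤ b := by
  have hS := M.pairwise_sort (· ≤ ·)
  have hSM := M.sort_eq (· ≤ ·)
  set S := M.sort (· ≤ ·) with hSdef
  have hL := L.sort_eq (· ≤ ·)
  have hR := R.sort_eq (· ≤ ·)
  have hLs := L.pairwise_sort (· ≤ ·)
  have hRs := R.pairwise_sort (· ≤ ·)
  set l := L.sort (· ≤ ·)
  set r := R.sort (· ≤ ·)
  have heq : S.map v = l ++ r := by
    apply List.Perm.eq_of_pairwise (le := (· ≤ ·)) (fun a b _ _ => le_antisymm)
    · exact hS.map v (fun a b hab => hv hab)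
    · rw [List.pairwise_append]
      refine ⟨hLs, hRs, fun a ha b hb => ho a ?_ b ?_⟩
      · rw [← hL]; exact ha
      · rw [← hR]; exact hb
    · rw [← Multiset.coe_eq_coe, ← Multiset.map_coe, hSM, ← Multiset.coe_add, hL, hR, h]
  refine ⟨(S.take l.length : List α), (S.drop l.length : List α), ?_, ?_, ?_, ?_⟩
  · rw [Multiset.coe_add, List.take_append_drop, hSM]
  · rw [Multiset.map_coe, List.map_take, heq, List.take_left', hL]; rfl
  · rw [Multiset.map_coe, List.map_drop, heq, List.drop_left', hR]; rfl
  · intro a ha b hb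
    rw [← List.take_append_drop l.length S, List.pairwise_append] at hS
    exact hS.2.2 a ha b hb

theorem step {α : Type} [LinearOrder α] [Fintype α]
    (C : Multiset ℝ → ℝ) (h2 : TwoPartitionOrderedMinimizable C)
    (v : α → ℝ) (hv : Monotone v) (A B : Multiset α) (hA : A ≠ 0) (hB : B ≠ 0)
    (hn : (A + B).Nodup) (hno : ¬ LOrd A B) :
    ∃ L R : Multiset α, L + R = A + B ∧ L ≠ 0 ∧ R ≠ 0 ∧
      ({Multiset.card L, Multiset.card R} : Multiset ℕ) =
        {Multiset.card A, Multiset.card B} ∧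
      C (L.map v) + C (R.map v) ≤ C (A.map v) + C (B.map v) ∧
      (hull L).card + (hull R).card < (hull A).card + (hull B).card := by
  have main : ∃ L R : Multiset ℝ, L + R = A.map v + B.map v ∧
      (∀ a ∈ L, ∀ b ∈ R, a ≤ b) ∧
      ({Multiset.card L, Multiset.card R} : Multiset ℕ) =
        {Multiset.card (A.map v), Multiset.card (B.map v)} ∧
      C L + C R ≤ C (A.map v) + C (B.map v) := by
    obtain ⟨L, R, h1, ho, hc, hC⟩ := h2 (A.map v) (B.map v) (by simpa using hA) (by simpa using hB)
    rcases ho with ho | ho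
    · exact ⟨L, R, h1, ho, hc, hC⟩
    · refine ⟨R, L, by rw [add_comm, h1], fun a ha b hb => ho b hb a ha, ?_, by linarith⟩
      rw [← hc, Multiset.pair_comm]
  obtain ⟨L, R, h1, ho, hc, hC⟩ := main
  rw [← Multiset.map_add] at h1
  obtain ⟨L', R', h3, rfl, rfl, ho'⟩ := lift_split v hv _ L R h1 ho
  simp only [Multiset.card_map] at hc
  have hz : ∀ n ∈ ({Multiset.card L', Multiset.card R'} : Multiset ℕ), n ≠ 0 := by
    rw [hc]
    intro n hn
    simp only [Multiset.insert_eq_cons, Multiset.mem_cons, Multiset.mem_singleton] at hn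
    rcases hn with rfl | rfl
    · simpa using hA
    · simpa using hB
  refine ⟨L', R', h3, ?_, ?_, hc, hC, hull_lt A B L' R' h3 hn ho' hno⟩
  · have := hz (Multiset.card L') (by simp)
    simpa using this
  · have := hz (Multiset.card R') (by simp)
    simpa using this

theorem labelled {α : Type} [LinearOrder α] [Fintype α]
    (C : Multiset ℝ → ℝ) (h2 : TwoPartitionOrderedMinimizable C)
    (v : α → ℝ) (hv : Monotone v) (N : ℕ) : ∀ (Q : Multiset (Multiset α)),
    (Q.map (fun A => (hull A).card)).sum = N → (∀ X ∈ Q, X ≠ 0) → Q.sum.Nodup →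
    ∃ Q' : Multiset (Multiset α), Q'.sum = Q.sum ∧ (∀ X ∈ Q', X ≠ 0) ∧
      Multiset.Pairwise LOrd Q' ∧
      Q'.map Multiset.card = Q.map Multiset.card ∧
      (Q'.map (fun A => C (A.map v))).sum ≤ (Q.map (fun A => C (A.map v))).sum := by
  induction N using Nat.strong_induction_on with
  | _ N ih =>
  intro Q hN hne hnd
  by_cases hp : Q.toList.Pairwise LOrd
  · exact ⟨Q, rfl, hne, ⟨Q.toList, by simp, hp⟩, rfl, le_rfl⟩
  obtain ⟨A, B, l, hQ, hno⟩ := list_not_pairwise _ _ hp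
  rw [Multiset.coe_toList] at hQ
  generalize (l : Multiset (Multiset α)) = T at hQ
  subst hQ
  simp only [Multiset.map_cons, Multiset.sum_cons, ← add_assoc] at hN hnd ⊢
  obtain ⟨L, R, h3, hL, hR, hc, hC, hlt⟩ := step C h2 v hv A B (hne A (by simp)) (hne B (by simp))
    (Multiset.nodup_add.1 hnd).1 hno
  obtain ⟨Q', q1, q2, q3, q4, q5⟩ := ih (((L ::ₘ R ::ₘ T).map (fun A => (hull A).card)).sum)
    (by simp only [Multiset.map_cons, Multiset.sum_cons]; omega) (L ::ₘ R ::ₘ T) rfl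
    (by
      intro X hX
      simp only [Multiset.mem_cons] at hX
      rcases hX with rfl | rfl | hX
      · exact hL
      · exact hR
      · exact hne X (by simp [hX]))
    (by simp only [Multiset.sum_cons, ← add_assoc]; rw [h3]; exact hnd)
  simp only [Multiset.map_cons, Multiset.sum_cons, ← add_assoc] at q1 q4 q5
  refine ⟨Q', by rw [q1, h3], q2, q3, ?_, by linarith⟩
  rw [q4]
  have := congrArg (· + T.map Multiset.card) hc
  simpa using this

theorem lift_partition {α : Type} (v : α → ℝ) (P : Multiset (Multiset ℝ)) :
    ∀ M : Multiset α, M.map v = P.sum →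
    ∃ Q : Multiset (Multiset α), Q.sum = M ∧ Q.map (Multiset.map v) = P := by
  induction P using Multiset.induction_on with
  | empty =>
    intro M hM
    refine ⟨0, ?_, rfl⟩
    simp at hM
    simp [hM]
  | cons X P ih =>
    intro M hM
    rw [Multiset.sum_cons, ← Multiset.rel_eq, Multiset.rel_map_left, Multiset.rel_add_right] at hM
    obtain ⟨M1, M2, h1, h2, rfl⟩ := hM
    rw [← Multiset.rel_map_left (r := (· = ·)), Multiset.rel_eq] at h1 h2
    obtain ⟨Q, rfl, hQ⟩ := ih M2 h2
    exact ⟨M1 ::ₘ Q, by simp, by simp [h1, hQ]⟩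

theorem two_partition_OM_implies_q_partition_OM
    (C : Multiset ℝ → ℝ) (h2 : TwoPartitionOrderedMinimizable C)
    (q : ℕ) (hq : 1 ≤ q) (Ω : Multiset ℝ) (P : Multiset (Multiset ℝ))
    (hsum : P.sum = Ω) (hne : ∀ X ∈ P, X ≠ 0) (hcard : Multiset.card P = q) :
    ∃ P' : Multiset (Multiset ℝ), P'.sum = Ω ∧ (∀ X ∈ P', X ≠ 0) ∧
      Multiset.Pairwise PairwiseOrdered P' ∧
      P'.map Multiset.card = P.map Multiset.card ∧
      (P'.map C).sum ≤ (P.map C).sum := by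
  have hS := (Ω.pairwise_sort (· ≤ ·)).sortedLE.monotone_get
  have hSM := Ω.sort_eq (· ≤ ·)
  set S := Ω.sort (· ≤ ·)
  have hM : (Finset.univ : Finset (Fin S.length)).val.map S.get = P.sum := by
    rw [hsum, ← hSM, Fin.univ_val_map, List.ofFn_get]
  obtain ⟨Q, hQ1, hQ2⟩ := lift_partition S.get P _ hM
  subst hQ2
  obtain ⟨Q', q1, q2, ⟨l, rfl, q3⟩, q4, q5⟩ := labelled C h2 S.get hS _ Q rfl
    (by
      intro X hX h0
      exact hne _ (Multiset.mem_map_of_mem _ hX) (by simp [h0]))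
    (by rw [hQ1]; exact Finset.univ.nodup)
  refine ⟨(l : Multiset _).map (Multiset.map S.get), ?_, ?_, ?_, ?_, ?_⟩
  · have e : ∀ Q : Multiset (Multiset (Fin S.length)),
        (Q.map (Multiset.map S.get)).sum = Q.sum.map S.get := fun Q =>
      (map_multiset_sum (Multiset.mapAddMonoidHom S.get) Q).symm
    rw [e, q1, ← e, hsum]
  · intro X hX
    obtain ⟨Y, hY, rfl⟩ := Multiset.mem_map.1 hX
    simpa using q2 Y hY
  · refine ⟨l.map (Multiset.map S.get), by rw [Multiset.map_coe], ?_⟩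
    refine q3.map _ ?_
    intro A B hAB
    simp only [PairwiseOrdered, Multiset.mem_map]
    rcases hAB with h | h
    · left
      rintro _ ⟨a, ha, rfl⟩ _ ⟨b, hb, rfl⟩
      exact hS (h a ha b hb)
    · right
      rintro _ ⟨a, ha, rfl⟩ _ ⟨b, hb, rfl⟩
      exact hS (h a ha b hb)
  · simp only [Multiset.map_map, Function.comp_def, Multiset.card_map]
    exact q4
  · simp only [Multiset.map_map, Function.comp_def]
    exact q5
end

section
/- The sum-of-squares-error cost SSE is 2-partition ordered minimizable: for every finite multiset Ω of reals and every partition of Ω into two nonempty multisets A, B there exist pairwise ordered multisets L, R with L + R = Ω, whose multiset of cardinalities {|L|,|R|} equals {|A|,|B|}, and with SSE(L) + SSE(R) ≤ SSE(A) + SSE(B). -/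
/-- Sum of squares error: `SSE(X) = Σ_{x∈X} (x − μ(X))²` with `μ(X)` the mean of `X`. -/
noncomputable def SSE (X : Multiset ℝ) : ℝ :=
  (X.map (fun x => (x - X.sum / (Multiset.card X : ℝ)) ^ 2)).sum

theorem aux_sse (X : Multiset ℝ) (h : X ≠ 0) :
    SSE X = (X.map (fun x => x ^ 2)).sum - X.sum ^ 2 / (Multiset.card X : ℝ) := by
  have key : ∀ (c : ℝ) (Y : Multiset ℝ), (Y.map (fun x => (x - c) ^ 2)).sum
      = (Y.map (fun x => x ^ 2)).sum - 2 * c * Y.sum + (Multiset.card Y : ℝ) * c ^ 2 := by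
    intro c Y
    induction Y using Multiset.induction_on with
    | empty => simp
    | cons a s ih => simp [ih]; ring
  have hc : (Multiset.card X : ℝ) ≠ 0 := by
    simpa using h
  unfold SSE
  rw [key]
  field_simp
  ring

theorem aux_split (Ω : Multiset ℝ) (k : ℕ) (hk : k ≤ Multiset.card Ω) :
    ∃ L R : Multiset ℝ, L + R = Ω ∧ Multiset.card L = k ∧ ∀ a ∈ L, ∀ b ∈ R, a ≤ b := by
  refine ⟨((Ω.sort (· ≤ ·)).take k : List ℝ), ((Ω.sort (· ≤ ·)).drop k : List ℝ), ?_, ?_, ?_⟩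
  · rw [Multiset.coe_add, List.take_append_drop, Multiset.sort_eq]
  · simpa using hk
  · intro a ha b hb
    have h := Multiset.pairwise_sort Ω (· ≤ ·)
    rw [← List.take_append_drop k (Ω.sort (· ≤ ·)), List.pairwise_append] at h
    exact h.2.2 a (by simpa using ha) b (by simpa using hb)

theorem aux_sum (L R A B : Multiset ℝ) (h : L + R = A + B)
    (hc : Multiset.card L = Multiset.card A) (ho : ∀ a ∈ L, ∀ b ∈ R, a ≤ b) :
    L.sum ≤ A.sum := by
  by_cases hL : L = 0
  · subst hL
    have : A = 0 := by simpa using hc.symm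
    simp [this]
  obtain ⟨t, htL, ht⟩ : ∃ t ∈ L, ∀ a ∈ L, a ≤ t := by
    have hne : L.toFinset.Nonempty := by
      obtain ⟨x, hx⟩ := Multiset.exists_mem_of_ne_zero hL
      exact ⟨x, by simpa using hx⟩
    obtain ⟨t, h1, h2⟩ := Finset.exists_max_image L.toFinset id hne
    exact ⟨t, by simpa using h1, fun a ha => h2 a (by simpa using ha)⟩
  have e1 : ∀ Y : Multiset ℝ, (Y.map (fun x => min (x - t) 0)).sum
      ≤ Y.sum - (Multiset.card Y : ℝ) * t := by
    intro Y
    induction Y using Multiset.induction_on with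
    | empty => simp
    | cons a s ih =>
      simp only [Multiset.map_cons, Multiset.sum_cons, Multiset.card_cons]
      push_cast
      linarith [min_le_left (a - t) 0]
  have e2 : ∀ Y : Multiset ℝ, (Y.map (fun x => min (x - t) 0)).sum ≤ 0 := by
    intro Y
    induction Y using Multiset.induction_on with
    | empty => simp
    | cons a s ih =>
      simp only [Multiset.map_cons, Multiset.sum_cons]
      linarith [min_le_right (a - t) 0]
  have e3 : ∀ Y : Multiset ℝ, (∀ a ∈ Y, a ≤ t) → (Y.map (fun x => min (x - t) 0)).sum
      = Y.sum - (Multiset.card Y : ℝ) * t := by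
    intro Y
    induction Y using Multiset.induction_on with
    | empty => simp
    | cons a s ih =>
      intro hY
      have := ih (fun b hb => hY b (Multiset.mem_cons_of_mem hb))
      have ha := hY a (Multiset.mem_cons_self a s)
      simp only [Multiset.map_cons, Multiset.sum_cons, Multiset.card_cons]
      rw [min_eq_left (by linarith)]
      push_cast
      linarith
  have e4 : (R.map (fun x => min (x - t) 0)).sum = 0 := by
    apply Multiset.sum_eq_zero
    intro y hy
    obtain ⟨x, hx, rfl⟩ := Multiset.mem_map.1 hy
    exact min_eq_right (by linarith [ho t htL x hx])
  have e5 := congrArg (fun Y : Multiset ℝ => (Y.map (fun x => min (x - t) 0)).sum) h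
  simp only [Multiset.map_add, Multiset.sum_add] at e5
  have h1 := e1 A
  have h2 := e2 B
  have h3 := e3 L ht
  rw [← hc] at h1
  linarith

theorem aux_conv (s1 s s2 T p q : ℝ) (hp : 0 < p) (hq : 0 < q) (h1 : s1 ≤ s) (h2 : s ≤ s2) :
    s ^ 2 / p + (T - s) ^ 2 / q ≤ s1 ^ 2 / p + (T - s1) ^ 2 / q ∨
    s ^ 2 / p + (T - s) ^ 2 / q ≤ s2 ^ 2 / p + (T - s2) ^ 2 / q := by
  have key : ∀ u v : ℝ, (v ^ 2 / p + (T - v) ^ 2 / q) - (u ^ 2 / p + (T - u) ^ 2 / q)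
      = (v - u) * ((u + v) / p - (2 * T - u - v) / q) := by
    intro u v; ring
  rcases le_total ((s1 + s) / p - (2 * T - s1 - s) / q) 0 with hg | hg
  · left
    have := key s1 s
    nlinarith [mul_nonneg (sub_nonneg.2 h1) (neg_nonneg.2 hg)]
  · right
    have := key s s2
    have e1 : (s1 + s) / p ≤ (s + s2) / p := by gcongr ?_ / p; linarith
    have e2 : (2 * T - s - s2) / q ≤ (2 * T - s1 - s) / q := by gcongr ?_ / q; linarith
    have := mul_nonneg (sub_nonneg.2 h2)
      (show 0 ≤ (s + s2) / p - (2 * T - s - s2) / q by linarith)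
    linarith

/-- The sum-of-squares-error cost is 2-partition ordered minimizable. -/
theorem sse_two_partition_ordered_minimizable
    (Ω A B : Multiset ℝ) (hpart : A + B = Ω) (hA : A ≠ 0) (hB : B ≠ 0) :
    ∃ L R : Multiset ℝ, L + R = Ω ∧ PairwiseOrdered L R ∧
      ({Multiset.card L, Multiset.card R} : Multiset ℕ) =
        {Multiset.card A, Multiset.card B} ∧
      SSE L + SSE R ≤ SSE A + SSE B := by
  subst hpart
  have fin : ∀ L R : Multiset ℝ, L + R = A + B → Multiset.card L = Multiset.card A →
      Multiset.card R = Multiset.card B →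
      A.sum ^ 2 / (Multiset.card A : ℝ) + ((A + B).sum - A.sum) ^ 2 / (Multiset.card B : ℝ)
        ≤ L.sum ^ 2 / (Multiset.card A : ℝ) + ((A + B).sum - L.sum) ^ 2 / (Multiset.card B : ℝ) →
      SSE L + SSE R ≤ SSE A + SSE B := by
    intro L R h hl hr hle
    have hL : L ≠ 0 := by
      rw [← Multiset.card_pos, hl]; exact Multiset.card_pos.2 hA
    have hR : R ≠ 0 := by
      rw [← Multiset.card_pos, hr]; exact Multiset.card_pos.2 hB
    rw [aux_sse L hL, aux_sse R hR, aux_sse A hA, aux_sse B hB, hl, hr]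
    have e := congrArg (fun Y : Multiset ℝ => (Y.map (fun x => x ^ 2)).sum) h
    simp only [Multiset.map_add, Multiset.sum_add] at e
    have e2 : (A + B).sum - L.sum = R.sum := by rw [← h, Multiset.sum_add]; ring
    have e3 : (A + B).sum - A.sum = B.sum := by rw [Multiset.sum_add]; ring
    rw [e2, e3] at hle
    linarith
  obtain ⟨L1, R1, h1, c1, o1⟩ := aux_split (A + B) (Multiset.card A) (by simp)
  obtain ⟨L2, R2, h2, c2, o2⟩ := aux_split (A + B) (Multiset.card B) (by simp)
  have d1 : Multiset.card R1 = Multiset.card B := by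
    have := congrArg Multiset.card h1
    simp only [Multiset.card_add] at this; omega
  have d2 : Multiset.card R2 = Multiset.card A := by
    have := congrArg Multiset.card h2
    simp only [Multiset.card_add] at this; omega
  have s1 := aux_sum L1 R1 A B h1 c1 o1
  have s2 := aux_sum L2 R2 B A (by rw [h2, add_comm]) c2 o2
  have s3 : A.sum ≤ R2.sum := by
    have := congrArg Multiset.sum h2
    simp only [Multiset.sum_add] at this; linarith
  rcases aux_conv L1.sum A.sum R2.sum (A + B).sum (Multiset.card A) (Multiset.card B)
    (by exact_mod_cast Multiset.card_pos.2 hA) (by exact_mod_cast Multiset.card_pos.2 hB) s1 s3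
    with hh | hh
  · exact ⟨L1, R1, h1, Or.inl o1, by rw [c1, d1], fin L1 R1 h1 c1 d1 hh⟩
  · have h2' : R2 + L2 = A + B := by rw [add_comm, h2]
    exact ⟨R2, L2, h2', Or.inr (fun a ha b hb => o2 b hb a ha), by rw [c2, d2],
      fin R2 L2 h2' d2 c2 hh⟩
end

section
/- The maximum-distance cost C_∞ is 2-partition ordered minimizable: for every finite multiset Ω of reals and every partition of Ω into two nonempty multisets A, B there exist pairwise ordered multisets L, R with L + R = Ω, whose multiset of cardinalities {|L|,|R|} equals {|A|,|B|}, and with C_∞(L) + C_∞(R) ≤ C_∞(A) + C_∞(B). -/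
/-- Maximum of a (nonempty finite) multiset of reals. -/
noncomputable def mmax (X : Multiset ℝ) : ℝ := sSup {y : ℝ | y ∈ X}

/-- Minimum of a (nonempty finite) multiset of reals. -/
noncomputable def mmin (X : Multiset ℝ) : ℝ := sInf {y : ℝ | y ∈ X}

/-- Maximum-distance cost: `C_∞(X) = max_{x∈X} |x − (max(X) + min(X))/2|`. -/
noncomputable def Cinf (X : Multiset ℝ) : ℝ :=
  sSup {y : ℝ | ∃ x ∈ X, y = |x - (mmax X + mmin X) / 2|}

theorem cinf_aux (X : Multiset ℝ) (m M : ℝ) (hm : m ∈ X) (hM : M ∈ X)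
    (hb : ∀ x ∈ X, m ≤ x ∧ x ≤ M) : Cinf X = (M - m) / 2 := by
  have h1 : mmax X = M := by
    have : IsGreatest {y : ℝ | y ∈ X} M := ⟨hM, fun x hx => (hb x hx).2⟩
    exact this.csSup_eq
  have h2 : mmin X = m := by
    have : IsLeast {y : ℝ | y ∈ X} m := ⟨hm, fun x hx => (hb x hx).1⟩
    exact this.csInf_eq
  have h3 : IsGreatest {y : ℝ | ∃ x ∈ X, y = |x - (mmax X + mmin X) / 2|} ((M - m) / 2) := by
    rw [h1, h2]
    constructor
    · refine ⟨M, hM, ?_⟩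
      rw [abs_of_nonneg] <;> linarith [(hb M hM).1]
    · rintro y ⟨x, hx, rfl⟩
      rw [abs_le]
      constructor <;> linarith [(hb x hx).1, (hb x hx).2]
  exact h3.csSup_eq

theorem extremes_aux (X : Multiset ℝ) (hX : X ≠ 0) :
    ∃ m ∈ X, ∃ M ∈ X, (∀ x ∈ X, m ≤ x ∧ x ≤ M) := by
  have hne : X.toFinset.Nonempty := by
    obtain ⟨a, ha⟩ := Multiset.exists_mem_of_ne_zero hX
    exact ⟨a, by simpa using ha⟩
  refine ⟨X.toFinset.min' hne, by simpa using X.toFinset.min'_mem hne,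
    X.toFinset.max' hne, by simpa using X.toFinset.max'_mem hne, fun x hx => ⟨?_, ?_⟩⟩
  · exact Finset.min'_le _ _ (by simpa using hx)
  · exact Finset.le_max' _ _ (by simpa using hx)

theorem split_aux (X : Multiset ℝ) (k : ℕ) (hk : k ≤ Multiset.card X) :
    ∃ L R : Multiset ℝ, L + R = X ∧ Multiset.card L = k ∧ ∀ a ∈ L, ∀ b ∈ R, a ≤ b := by
  refine ⟨((X.sort (· ≤ ·)).take k : List ℝ), ((X.sort (· ≤ ·)).drop k : List ℝ), ?_, ?_, ?_⟩
  · rw [Multiset.coe_add, List.take_append_drop, Multiset.sort_eq]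
  · simpa using hk
  · have h := Multiset.pairwise_sort X (· ≤ ·)
    rw [← List.take_append_drop k (X.sort (· ≤ ·)), List.pairwise_append] at h
    intro a ha b hb
    exact h.2.2 a (by simpa using ha) b (by simpa using hb)

theorem count_aux (A B L R : Multiset ℝ) (p : ℝ → Prop) [DecidablePred p] (h : L + R = A + B)
    (hA : ∀ a ∈ A, p a) (hR : ∀ a ∈ R, ¬ p a) (x : ℝ) (hx : x ∈ L) (hpx : ¬ p x)
    (hc : Multiset.card L = Multiset.card A) : False := by
  have h1 : (L + R).countP p = (A + B).countP p := by rw [h]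
  rw [Multiset.countP_add, Multiset.countP_add, Multiset.countP_eq_card.2 hA,
    Multiset.countP_eq_zero.2 hR] at h1
  have h2 : L.countP p ≠ Multiset.card L := fun h => hpx (Multiset.countP_eq_card.1 h x hx)
  have h3 := Multiset.countP_le_card p L
  omega

theorem main_aux (A B : Multiset ℝ) (a A' b B' : ℝ) (ha : a ∈ A) (hA' : A' ∈ A)
    (hA : ∀ x ∈ A, a ≤ x ∧ x ≤ A') (hb : b ∈ B) (hB' : B' ∈ B)
    (hB : ∀ x ∈ B, b ≤ x ∧ x ≤ B') (hab : a ≤ b) :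
    ∃ L R : Multiset ℝ, L + R = A + B ∧ PairwiseOrdered L R ∧
      Multiset.card L = Multiset.card A ∧ Multiset.card R = Multiset.card B ∧
      Cinf L + Cinf R ≤ Cinf A + Cinf B := by
  classical
  obtain ⟨L, R, hLR, hcL, hord⟩ := split_aux (A + B) (Multiset.card A) (by simp)
  have hcR : Multiset.card R = Multiset.card B := by
    have := congrArg Multiset.card hLR
    simp only [Multiset.card_add] at this
    omega
  have hL0 : L ≠ 0 := by
    rintro rfl
    have := Multiset.card_pos_iff_exists_mem.2 ⟨a, ha⟩
    simp at hcL
    simp [← hcL] at this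
  have hR0 : R ≠ 0 := by
    rintro rfl
    have := Multiset.card_pos_iff_exists_mem.2 ⟨b, hb⟩
    rw [← hcR] at this
    simp at this
  obtain ⟨l, hl, l', hl', hL⟩ := extremes_aux L hL0
  obtain ⟨r, hr, r', hr', hR⟩ := extremes_aux R hR0
  refine ⟨L, R, hLR, Or.inl hord, hcL, hcR, ?_⟩
  rw [cinf_aux A a A' ha hA' hA, cinf_aux B b B' hb hB' hB, cinf_aux L l l' hl hl' hL,
    cinf_aux R r r' hr hr' hR]
  have hl1 : l ∈ A + B := hLR ▸ Multiset.mem_add.2 (Or.inl hl)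
  have hr1 : r' ∈ A + B := hLR ▸ Multiset.mem_add.2 (Or.inr hr')
  have hal : a ≤ l := by
    rcases Multiset.mem_add.1 hl1 with h | h
    · exact (hA _ h).1
    · exact hab.trans (hB _ h).1
  have hlr := hord l' hl' r hr
  have hbB := (hB b hb).2
  rcases le_total A' B' with h | h
  · have hrB : r' ≤ B' := by
      rcases Multiset.mem_add.1 hr1 with h' | h'
      · exact (hA _ h').2.trans h
      · exact (hB _ h').2
    have h1 : l' ≤ A' := by
      by_contra! hlt
      refine count_aux A B L R (· < l') hLR (fun x hx => (hA x hx).2.trans_lt hlt)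
        (fun x hx => not_lt.2 (hord l' hl' x hx)) l' hl' (lt_irrefl _) hcL
    have h2 : b ≤ r := by
      by_contra! hlt
      refine count_aux B A R L (r < ·) (by rw [add_comm, hLR, add_comm])
        (fun x hx => hlt.trans_le (hB x hx).1)
        (fun x hx => not_lt.2 (hord x hx r hr)) r hr (lt_irrefl _) hcR
    linarith
  · have hrA : r' ≤ A' := by
      rcases Multiset.mem_add.1 hr1 with h' | h'
      · exact (hA _ h').2
      · exact (hB _ h').2.trans h
    linarith

/-- The maximum-distance cost is 2-partition ordered minimizable. -/
theorem cinf_two_partition_ordered_minimizable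
    (Ω A B : Multiset ℝ) (hpart : A + B = Ω) (hA : A ≠ 0) (hB : B ≠ 0) :
    ∃ L R : Multiset ℝ, L + R = Ω ∧ PairwiseOrdered L R ∧
      ({Multiset.card L, Multiset.card R} : Multiset ℕ) =
        {Multiset.card A, Multiset.card B} ∧
      Cinf L + Cinf R ≤ Cinf A + Cinf B := by
  subst hpart
  obtain ⟨a, ha, a', ha', hA2⟩ := extremes_aux A hA
  obtain ⟨b, hb, b', hb', hB2⟩ := extremes_aux B hB
  rcases le_total a b with h | h
  · obtain ⟨L, R, h1, h2, h3, h4, h5⟩ := main_aux A B a a' b b' ha ha' hA2 hb hb' hB2 h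
    exact ⟨L, R, h1, h2, by rw [h3, h4], h5⟩
  · obtain ⟨L, R, h1, h2, h3, h4, h5⟩ := main_aux B A b b' a a' hb hb' hB2 ha ha' hA2 h
    exact ⟨L, R, by rw [h1, add_comm], h2, by rw [h3, h4, Multiset.pair_comm], by linarith⟩
end

section
/- The round-up cost C_↑ is 2-partition ordered minimizable: for every finite multiset Ω of reals and every partition of Ω into two nonempty multisets A, B there exist pairwise ordered multisets L, R with L + R = Ω, whose multiset of cardinalities {|L|,|R|} equals {|A|,|B|}, and with C_↑(L) + C_↑(R) ≤ C_↑(A) + C_↑(B). -/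
/-- Round-up cost: `C_↑(X) = Σ_{x∈X} (max(X) − x)`. -/
noncomputable def Cup (X : Multiset ℝ) : ℝ :=
  (X.map (fun x => mmax X - x)).sum

theorem le_mmax (X : Multiset ℝ) (x : ℝ) (hx : x ∈ X) : x ≤ mmax X := by
  refine le_csSup (s := {y : ℝ | y ∈ X}) ?_ hx
  have h : {y : ℝ | y ∈ X} = (X.toFinset : Set ℝ) := by ext; simp
  rw [h]
  exact X.toFinset.bddAbove

theorem mmax_le (X : Multiset ℝ) (h0 : X ≠ 0) (m : ℝ) (h : ∀ x ∈ X, x ≤ m) : mmax X ≤ m :=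
  csSup_le (Multiset.exists_mem_of_ne_zero h0) h

theorem Cup_eq (X : Multiset ℝ) : Cup X = (Multiset.card X : ℝ) * mmax X - X.sum := by
  unfold Cup
  rw [Multiset.sum_map_sub]
  simp

theorem exists_split (Ω : Multiset ℝ) (k : ℕ) (hk : k ≤ Multiset.card Ω) :
    ∃ L R : Multiset ℝ, L + R = Ω ∧ (∀ a ∈ L, ∀ b ∈ R, a ≤ b) ∧ Multiset.card L = k := by
  have hs : (Ω.sort (· ≤ ·)).Pairwise (· ≤ ·) := Multiset.pairwise_sort Ω (· ≤ ·)
  rw [← List.take_append_drop k (Ω.sort (· ≤ ·)), List.pairwise_append] at hs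
  refine ⟨((Ω.sort (· ≤ ·)).take k : List ℝ), ((Ω.sort (· ≤ ·)).drop k : List ℝ), ?_, ?_, ?_⟩
  · rw [Multiset.coe_add, List.take_append_drop, Multiset.sort_eq]
  · intro a ha b hb
    exact hs.2.2 a (by simpa using ha) b (by simpa using hb)
  · simp [hk]

theorem roundup_aux (A B : Multiset ℝ) (hA : A ≠ 0) (hB : B ≠ 0) (hm : mmax A ≤ mmax B) :
    ∃ L R : Multiset ℝ, L + R = A + B ∧ (∀ a ∈ L, ∀ b ∈ R, a ≤ b) ∧
      Multiset.card L = Multiset.card A ∧ Multiset.card R = Multiset.card B ∧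
      Cup L + Cup R ≤ Cup A + Cup B := by
  obtain ⟨L, R, h, ho, hL⟩ := exists_split (A + B) (Multiset.card A) (by simp)
  have hR : Multiset.card R = Multiset.card B := by
    have := congrArg Multiset.card h
    simp only [Multiset.card_add] at this
    omega
  have hL0 : L ≠ 0 := by
    rw [← Multiset.card_pos, hL]; exact Multiset.card_pos.2 hA
  have hR0 : R ≠ 0 := by
    rw [← Multiset.card_pos, hR]; exact Multiset.card_pos.2 hB
  refine ⟨L, R, h, ho, hL, hR, ?_⟩
  have h1 : mmax L ≤ mmax A := by
    apply mmax_le L hL0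
    intro l hl
    by_contra! hlt
    have e := congrArg (fun X => Multiset.card (X.filter (· ≤ mmax A))) h
    simp only [Multiset.filter_add, Multiset.card_add] at e
    have e1 : R.filter (· ≤ mmax A) = 0 := by
      rw [Multiset.filter_eq_nil]
      intro b hb hb'
      have := ho l hl b hb
      linarith
    have e2 : A.filter (· ≤ mmax A) = A :=
      Multiset.filter_eq_self.2 (fun a ha => le_mmax A a ha)
    have e3 : Multiset.card (L.filter (· ≤ mmax A)) < Multiset.card L := by
      apply Multiset.card_lt_card
      refine lt_of_le_of_ne (Multiset.filter_le _ _) ?_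
      intro hh
      have := Multiset.filter_eq_self.1 hh l hl
      linarith
    rw [e1, e2] at e
    simp only [Multiset.card_zero] at e
    omega
  have h2 : mmax R ≤ mmax B := by
    apply mmax_le R hR0
    intro r hr
    have : r ∈ A + B := by rw [← h]; exact Multiset.mem_add.2 (Or.inr hr)
    rcases Multiset.mem_add.1 this with h' | h'
    · exact (le_mmax A r h').trans hm
    · exact le_mmax B r h'
  have hs := congrArg Multiset.sum h
  simp only [Multiset.sum_add] at hs
  rw [Cup_eq, Cup_eq, Cup_eq, Cup_eq, hL, hR]
  have h3 := mul_le_mul_of_nonneg_left h1 (Nat.cast_nonneg (α := ℝ) (Multiset.card A))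
  have h4 := mul_le_mul_of_nonneg_left h2 (Nat.cast_nonneg (α := ℝ) (Multiset.card B))
  linarith

/-- The round-up cost is 2-partition ordered minimizable. -/
theorem roundup_two_partition_ordered_minimizable
    (Ω A B : Multiset ℝ) (hpart : A + B = Ω) (hA : A ≠ 0) (hB : B ≠ 0) :
    ∃ L R : Multiset ℝ, L + R = Ω ∧ PairwiseOrdered L R ∧
      ({Multiset.card L, Multiset.card R} : Multiset ℕ) =
        {Multiset.card A, Multiset.card B} ∧
      Cup L + Cup R ≤ Cup A + Cup B := by
  subst hpart
  rcases le_total (mmax A) (mmax B) with hm | hm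
  · obtain ⟨L, R, h, ho, hL, hR, hc⟩ := roundup_aux A B hA hB hm
    exact ⟨L, R, h, Or.inl ho, by rw [hL, hR], hc⟩
  · obtain ⟨L, R, h, ho, hL, hR, hc⟩ := roundup_aux B A hB hA hm
    refine ⟨L, R, h.trans (add_comm _ _), Or.inl ho, ?_, by linarith⟩
    rw [hL, hR]
    exact Multiset.pair_comm _ _
end

section
/- The sum-of-squares-error cost is concave on sorted data: for reals x₁ ≤ x₂ ≤ … ≤ x_n and all integers 0 ≤ a < b < c < d ≤ n, SSE(a,c) + SSE(b,d) ≤ SSE(a,d) + SSE(b,c). -/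
/-- The multiset `{x_{i+1}, …, x_j}` of the data points with indices in `(i, j]`. -/
def intervalMS (x : ℕ → ℝ) (i j : ℕ) : Multiset ℝ := (Finset.Ioc i j).val.map x

lemma sse_formula (x : ℕ → ℝ) (i j : ℕ) (h : i < j) :
    SSE (intervalMS x i j) =
      ∑ k ∈ Finset.Ioc i j, x k ^ 2 - (∑ k ∈ Finset.Ioc i j, x k) ^ 2 / ((j : ℝ) - i) := by
  have hN : ((j : ℝ) - i) ≠ 0 := by
    have : (i : ℝ) < j := by exact_mod_cast h
    linarith
  have hc : ((j - i : ℕ) : ℝ) = (j : ℝ) - i := by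
    rw [Nat.cast_sub h.le]
  have e : SSE (intervalMS x i j) = ∑ k ∈ Finset.Ioc i j,
      (x k - (∑ k ∈ Finset.Ioc i j, x k) / ((j : ℝ) - i)) ^ 2 := by
    unfold SSE intervalMS
    rw [Multiset.map_map, Multiset.card_map]
    have : ((Multiset.card (Finset.Ioc i j).val : ℕ) : ℝ) = (j : ℝ) - i := by
      rw [← hc]
      congr 1
      exact Nat.card_Ioc i j
    rw [this]
    rfl
  rw [e]
  generalize hS : (∑ k ∈ Finset.Ioc i j, x k) = S
  simp only [sub_sq, Finset.sum_add_distrib, Finset.sum_sub_distrib, Finset.sum_const,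
    Nat.card_Ioc, nsmul_eq_mul, ← Finset.sum_mul, ← Finset.mul_sum, hS, hc]
  field_simp
  ring

lemma quad_aux (p q r U W m : ℝ) (hp : 0 < p) (hq : 0 < q) (hr : 0 < r)
    (hU : U ≤ 0) (hW : 0 ≤ W) :
    (U + p * m + q * m + (W + r * m)) ^ 2 / (p + q + r) + (q * m) ^ 2 / q ≤
      (U + p * m + q * m) ^ 2 / (p + q) + (q * m + (W + r * m)) ^ 2 / (q + r) := by
  have e1 : (U + p * m + q * m + (W + r * m)) ^ 2 / (p + q + r) =
      (U + W) ^ 2 / (p + q + r) + 2 * m * (U + W) + (p + q + r) * m ^ 2 := by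
    field_simp
    ring
  have e2 : (q * m) ^ 2 / q = q * m ^ 2 := by
    field_simp
  have e3 : (U + p * m + q * m) ^ 2 / (p + q) =
      U ^ 2 / (p + q) + 2 * m * U + (p + q) * m ^ 2 := by
    field_simp
    ring
  have e4 : (q * m + (W + r * m)) ^ 2 / (q + r) =
      W ^ 2 / (q + r) + 2 * m * W + (q + r) * m ^ 2 := by
    field_simp
    ring
  have h1 : (U + W) ^ 2 / (p + q + r) ≤ (U ^ 2 + W ^ 2) / (p + q + r) := by
    gcongr
    nlinarith [mul_nonneg (neg_nonneg.2 hU) hW]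
  have h2 : U ^ 2 / (p + q + r) ≤ U ^ 2 / (p + q) := by
    exact div_le_div_of_nonneg_left (by positivity) (by positivity) (by linarith)
  have h3 : W ^ 2 / (p + q + r) ≤ W ^ 2 / (q + r) := by
    exact div_le_div_of_nonneg_left (by positivity) (by positivity) (by linarith)
  rw [add_div] at h1
  rw [e1, e2, e3, e4]
  linarith

lemma sum_Ioc_split (f : ℕ → ℝ) (i j k : ℕ) (h : i ≤ j) (h' : j ≤ k) :
    ∑ l ∈ Finset.Ioc i k, f l = ∑ l ∈ Finset.Ioc i j, f l + ∑ l ∈ Finset.Ioc j k, f l :=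
  (Finset.sum_Ioc_consecutive f h h').symm

lemma sum_Ioc_le (x : ℕ → ℝ) (i j : ℕ) (M : ℝ) (hij : i < j)
    (h : ∀ k ∈ Finset.Ioc i j, x k ≤ M) :
    ∑ k ∈ Finset.Ioc i j, x k ≤ ((j : ℝ) - i) * M := by
  have := Finset.sum_le_card_nsmul _ _ _ h
  rwa [Nat.card_Ioc, nsmul_eq_mul, Nat.cast_sub hij.le] at this

lemma le_sum_Ioc (x : ℕ → ℝ) (i j : ℕ) (M : ℝ) (hij : i < j)
    (h : ∀ k ∈ Finset.Ioc i j, M ≤ x k) :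
    ((j : ℝ) - i) * M ≤ ∑ k ∈ Finset.Ioc i j, x k := by
  have := Finset.card_nsmul_le_sum _ _ _ h
  rwa [Nat.card_Ioc, nsmul_eq_mul, Nat.cast_sub hij.le] at this

/-- The sum-of-squares-error cost is concave (satisfies the quadrangle inequality)
on sorted data. -/
theorem sse_concave (n : ℕ) (x : ℕ → ℝ)
    (hsorted : ∀ l m : ℕ, 1 ≤ l → l ≤ m → m ≤ n → x l ≤ x m)
    (a b c d : ℕ) (hab : a < b) (hbc : b < c) (hcd : c < d) (hdn : d ≤ n) :
    SSE (intervalMS x a c) + SSE (intervalMS x b d) ≤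
      SSE (intervalMS x a d) + SSE (intervalMS x b c) := by
  rw [sse_formula x a c (by omega), sse_formula x b d (by omega), sse_formula x a d (by omega),
    sse_formula x b c hbc]
  have hA1 := sum_Ioc_le x a b (x b) hab (fun k hk => by
    rw [Finset.mem_Ioc] at hk
    exact hsorted k b (by omega) (by omega) (by omega))
  have hB1 := le_sum_Ioc x b c (x b) hbc (fun k hk => by
    rw [Finset.mem_Ioc] at hk
    exact hsorted b k (by omega) (by omega) (by omega))
  have hB2 := sum_Ioc_le x b c (x c) hbc (fun k hk => by
    rw [Finset.mem_Ioc] at hk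
    exact hsorted k c (by omega) (by omega) (by omega))
  have hC1 := le_sum_Ioc x c d (x c) hcd (fun k hk => by
    rw [Finset.mem_Ioc] at hk
    exact hsorted c k (by omega) (by omega) (by omega))
  rw [sum_Ioc_split x a b c hab.le hbc.le, sum_Ioc_split x b c d hbc.le hcd.le,
    sum_Ioc_split x a c d (by omega) hcd.le, sum_Ioc_split x a b c hab.le hbc.le,
    sum_Ioc_split (fun k => x k ^ 2) a c d (by omega) hcd.le,
    sum_Ioc_split (fun k => x k ^ 2) b c d hbc.le hcd.le]
  generalize (∑ k ∈ Finset.Ioc a b, x k) = u at *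
  generalize (∑ k ∈ Finset.Ioc b c, x k) = v at *
  generalize (∑ k ∈ Finset.Ioc c d, x k) = w at *
  have hp : 0 < (b : ℝ) - a := sub_pos.2 (by exact_mod_cast hab)
  have hq : 0 < (c : ℝ) - b := sub_pos.2 (by exact_mod_cast hbc)
  have hr : 0 < (d : ℝ) - c := sub_pos.2 (by exact_mod_cast hcd)
  have e1 : (c : ℝ) - a = ((b : ℝ) - a) + (c - b) := by ring
  have e2 : (d : ℝ) - b = ((c : ℝ) - b) + (d - c) := by ring
  have e3 : (d : ℝ) - a = ((b : ℝ) - a) + (c - b) + (d - c) := by ring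
  rw [e1, e2, e3]
  generalize (b : ℝ) - a = p at *
  generalize (c : ℝ) - b = q at *
  generalize (d : ℝ) - c = r at *
  obtain ⟨m, rfl⟩ : ∃ m, v = q * m := ⟨v / q, by field_simp⟩
  have hm1 : x b ≤ m := le_of_mul_le_mul_left hB1 hq
  have hm2 : m ≤ x c := le_of_mul_le_mul_left hB2 hq
  have hU : u - p * m ≤ 0 := by
    have := mul_le_mul_of_nonneg_left hm1 hp.le
    linarith
  have hW : 0 ≤ w - r * m := by
    have := mul_le_mul_of_nonneg_left hm2 hr.le
    linarith
  have := quad_aux p q r (u - p * m) (w - r * m) m hp hq hr hU hW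
  simp only [sub_add_cancel] at this
  linarith
end

section
/- The sum-of-absolute-error cost is concave on sorted data: for reals x₁ ≤ x₂ ≤ … ≤ x_n and all integers 0 ≤ a < b < c < d ≤ n, SAE(a,c) + SAE(b,d) ≤ SAE(a,d) + SAE(b,c). -/
/-- Sum of absolute error: `SAE(X) = min_{m∈ℝ} Σ_{x∈X} |x − m|`
(the minimum is attained at a median of `X`). -/
noncomputable def SAE (X : Multiset ℝ) : ℝ :=
  sInf (Set.range fun m : ℝ => (X.map (fun x => |x - m|)).sum)

theorem SAE_le_aux (x : ℕ → ℝ) (i j : ℕ) (m : ℝ) :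
    SAE (intervalMS x i j) ≤ ∑ t ∈ Finset.Ioc i j, |x t - m| := by
  have h : ∑ t ∈ Finset.Ioc i j, |x t - m|
      = ((intervalMS x i j).map (fun x => |x - m|)).sum := by
    simp [intervalMS, Multiset.map_map, Function.comp_def]
  rw [h]
  refine csInf_le ⟨0, ?_⟩ ⟨m, rfl⟩
  rintro _ ⟨k, rfl⟩
  apply Multiset.sum_nonneg
  intro y hy
  obtain ⟨z, -, rfl⟩ := Multiset.mem_map.1 hy
  exact abs_nonneg _

theorem le_SAE_add_aux (x : ℕ → ℝ) (i j i' j' : ℕ) (r : ℝ)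
    (h : ∀ m k : ℝ, r ≤ ∑ t ∈ Finset.Ioc i j, |x t - m| + ∑ t ∈ Finset.Ioc i' j', |x t - k|) :
    r ≤ SAE (intervalMS x i j) + SAE (intervalMS x i' j') := by
  refine le_ciInf_add_ciInf (fun m k => ?_)
  have := h m k
  simpa [intervalMS, Multiset.map_map, Function.comp_def] using this

theorem sum_split_aux (f : ℕ → ℝ) {i j k : ℕ} (h : i ≤ j) (h' : j ≤ k) :
    ∑ t ∈ Finset.Ioc i k, f t = ∑ t ∈ Finset.Ioc i j, f t + ∑ t ∈ Finset.Ioc j k, f t :=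
  (Finset.sum_Ioc_consecutive f h h').symm

/-- The sum-of-absolute-error cost is concave (satisfies the quadrangle inequality)
on sorted data. -/
theorem sae_concave (n : ℕ) (x : ℕ → ℝ)
    (hsorted : ∀ l m : ℕ, 1 ≤ l → l ≤ m → m ≤ n → x l ≤ x m)
    (a b c d : ℕ) (hab : a < b) (hbc : b < c) (hcd : c < d) (hdn : d ≤ n) :
    SAE (intervalMS x a c) + SAE (intervalMS x b d) ≤
      SAE (intervalMS x a d) + SAE (intervalMS x b c) := by
  apply le_SAE_add_aux
  intro m k₀
  obtain ⟨k, hk1, hk2, hk⟩ : ∃ k : ℝ, x (b+1) ≤ k ∧ k ≤ x c ∧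
      ∑ t ∈ Finset.Ioc b c, |x t - k| ≤ ∑ t ∈ Finset.Ioc b c, |x t - k₀| := by
    have hbc' : x (b+1) ≤ x c := hsorted _ _ (by omega) (by omega) (by omega)
    refine ⟨max (x (b+1)) (min k₀ (x c)), le_max_left _ _,
      max_le hbc' (min_le_right _ _), Finset.sum_le_sum fun t ht => ?_⟩
    rw [Finset.mem_Ioc] at ht
    have h1 : x (b+1) ≤ x t := hsorted _ _ (by omega) (by omega) (by omega)
    have h2 : x t ≤ x c := hsorted _ _ (by omega) (by omega) (by omega)
    rcases max_cases (x (b+1)) (min k₀ (x c)) with h | h <;>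
    rcases min_cases k₀ (x c) with h' | h' <;>
    rcases abs_cases (x t - k₀) with h3 | h3 <;>
    rw [abs_le] <;> constructor <;> linarith
  have e1 := sum_split_aux (fun t => |x t - m|) (show a ≤ c by omega) hcd.le
  have e2 := sum_split_aux (fun t => |x t - k|) hbc.le hcd.le
  have e3 := sum_split_aux (fun t => |x t - m|) hab.le (show b ≤ d by omega)
  have e4 := sum_split_aux (fun t => |x t - k|) hab.le hbc.le
  rcases le_total m k with hmk | hmk
  · have h1 := SAE_le_aux x a c m
    have h2 := SAE_le_aux x b d k
    have h3 : ∑ t ∈ Finset.Ioc c d, |x t - k| ≤ ∑ t ∈ Finset.Ioc c d, |x t - m| := by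
      refine Finset.sum_le_sum fun t ht => ?_
      rw [Finset.mem_Ioc] at ht
      have h2 : x c ≤ x t := hsorted _ _ (by omega) (by omega) (by omega)
      rw [abs_of_nonneg (by linarith), abs_of_nonneg (by linarith)]
      linarith
    linarith
  · have h1 := SAE_le_aux x a c k
    have h2 := SAE_le_aux x b d m
    have h3 : ∑ t ∈ Finset.Ioc a b, |x t - k| ≤ ∑ t ∈ Finset.Ioc a b, |x t - m| := by
      refine Finset.sum_le_sum fun t ht => ?_
      rw [Finset.mem_Ioc] at ht
      have h2 : x t ≤ x (b+1) := hsorted _ _ (by omega) (by omega) (by omega)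
      rw [abs_of_nonpos (by linarith), abs_of_nonpos (by linarith)]
      linarith
    linarith
end

section
/- The round-up cost is concave on sorted data: for reals x₁ ≤ x₂ ≤ … ≤ x_n and all integers 0 ≤ a < b < c < d ≤ n, C_↑(a,c) + C_↑(b,d) ≤ C_↑(a,d) + C_↑(b,c), where C_↑(i,j) = (j − i)·x_j − Σ_{l=i+1}^{j} x_l. -/
/-- Round-up cost of the multiset `{x_{i+1}, …, x_j}` on sorted data:
`C_↑(i,j) = (j − i)·x_j − Σ_{l=i+1}^{j} x_l`. -/
noncomputable def CupIdx (x : ℕ → ℝ) (i j : ℕ) : ℝ :=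
  ((j - i : ℕ) : ℝ) * x j - ∑ l ∈ Finset.Ioc i j, x l

/-- The round-up cost is concave (satisfies the quadrangle inequality) on sorted data. -/
theorem roundup_concave (n : ℕ) (x : ℕ → ℝ)
    (hsorted : ∀ l m : ℕ, 1 ≤ l → l ≤ m → m ≤ n → x l ≤ x m)
    (a b c d : ℕ) (hab : a < b) (hbc : b < c) (hcd : c < d) (hdn : d ≤ n) :
    CupIdx x a c + CupIdx x b d ≤ CupIdx x a d + CupIdx x b c := by
  have h := hsorted c d (by omega) hcd.le hdn
  have e1 := Finset.sum_Ioc_consecutive x hab.le hbc.le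
  have e2 := Finset.sum_Ioc_consecutive x hab.le (hbc.trans hcd).le
  have hb : (a : ℝ) ≤ b := by exact_mod_cast hab.le
  unfold CupIdx
  rw [Nat.cast_sub (by omega), Nat.cast_sub (by omega), Nat.cast_sub (by omega),
    Nat.cast_sub (by omega)]
  nlinarith [mul_nonneg (sub_nonneg.2 hb) (sub_nonneg.2 h)]
end

section
/- The round-down cost is concave on sorted data: for reals x₁ ≤ x₂ ≤ … ≤ x_n and all integers 0 ≤ a < b < c < d ≤ n, C_↓(a,c) + C_↓(b,d) ≤ C_↓(a,d) + C_↓(b,c), where C_↓(i,j) = Σ_{l=i+1}^{j} x_l − (j − i)·x_{i+1}. -/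
/-- Round-down cost of the multiset `{x_{i+1}, …, x_j}` on sorted data:
`C_↓(i,j) = Σ_{l=i+1}^{j} x_l − (j − i)·x_{i+1}`. -/
noncomputable def CdownIdx (x : ℕ → ℝ) (i j : ℕ) : ℝ :=
  (∑ l ∈ Finset.Ioc i j, x l) - ((j - i : ℕ) : ℝ) * x (i + 1)

/-- The round-down cost is concave (satisfies the quadrangle inequality) on sorted data. -/
theorem rounddown_concave (n : ℕ) (x : ℕ → ℝ)
    (hsorted : ∀ l m : ℕ, 1 ≤ l → l ≤ m → m ≤ n → x l ≤ x m)
    (a b c d : ℕ) (hab : a < b) (hbc : b < c) (hcd : c < d) (hdn : d ≤ n) :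
    CdownIdx x a c + CdownIdx x b d ≤ CdownIdx x a d + CdownIdx x b c := by
  have h1 : x (a + 1) ≤ x (b + 1) := hsorted _ _ (by omega) (by omega) (by omega)
  have h2 := Finset.sum_Ioc_consecutive x (show a ≤ c by omega) hcd.le
  have h3 := Finset.sum_Ioc_consecutive x hbc.le hcd.le
  have h4 : (c : ℝ) ≤ d := by exact_mod_cast hcd.le
  unfold CdownIdx
  rw [Nat.cast_sub (show a ≤ c by omega), Nat.cast_sub (show b ≤ d by omega),
    Nat.cast_sub (show a ≤ d by omega), Nat.cast_sub hbc.le, ← h2, ← h3]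
  nlinarith [mul_nonneg (sub_nonneg.2 h4) (sub_nonneg.2 h1)]
end

section
/- The quadrangle inequality does not imply ordered minimizability: the cost function C_min(X) = min(X) on nonempty finite multisets of nonnegative reals satisfies the quadrangle inequality (on sorted data C_min(a,c) + C_min(b,d) = C_min(a,d) + C_min(b,c) for all 0 ≤ a < b < c < d ≤ n), yet it is not ordered minimizable: for every finite set Ω of at least 4 nonnegative reals with three smallest elements ω₁ < ω₂ < ω₃, the bipartition A = {ω₁, ω₃}, B = Ω \ A has total cost C_min(A) + C_min(B) = ω₁ + ω₂, while every pairwise ordered bipartition {L, R} of Ω with min(|L|,|R|) ≥ 2 has total cost C_min(L) + C_min(R) ≥ ω₁ + ω₃ > ω₁ + ω₂. -/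
theorem mmin_eq_of (X : Multiset ℝ) (m : ℝ) (hm : m ∈ X) (h : ∀ y ∈ X, m ≤ y) : mmin X = m :=
  IsLeast.csInf_eq (s := {y : ℝ | y ∈ X}) ⟨hm, fun y hy => h y hy⟩

theorem mmin_spec (X : Multiset ℝ) (m : ℝ) (hm : m ∈ X) :
    mmin X ∈ X ∧ ∀ y ∈ X, mmin X ≤ y := by
  obtain ⟨a, ha, h⟩ := Finset.exists_min_image X.toFinset id ⟨m, by simpa using hm⟩
  have ha' : a ∈ X := by simpa using ha
  have h' : ∀ y ∈ X, a ≤ y := fun y hy => h y (by simpa using hy)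
  rw [mmin_eq_of X a ha' h']
  exact ⟨ha', h'⟩

theorem ordered_cost (Ω : Finset ℝ) (ω₁ ω₂ ω₃ : ℝ) (h12 : ω₁ < ω₂) (h23 : ω₂ < ω₃)
    (h : ∀ y ∈ Ω, y ≠ ω₁ → y ≠ ω₂ → y ≠ ω₃ → ω₃ < y) (L R : Multiset ℝ)
    (hLR : L + R = Ω.val) (hL : 2 ≤ Multiset.card L) (hR : 2 ≤ Multiset.card R)
    (ho : ∀ a ∈ L, ∀ b ∈ R, a ≤ b) : ω₁ + ω₃ ≤ mmin L + mmin R := by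
  have hnd : (L + R).Nodup := hLR ▸ Ω.nodup
  obtain ⟨hLn, -, hdis⟩ := Multiset.nodup_add.1 hnd
  have hmem : ∀ y, y ∈ L ∨ y ∈ R → y ∈ Ω := by
    intro y hy
    rw [← Finset.mem_val, ← hLR]
    exact Multiset.mem_add.2 hy
  have hcase : ∀ y, y ∈ L ∨ y ∈ R → y = ω₁ ∨ y = ω₂ ∨ ω₃ ≤ y := by
    intro y hy
    have := h y (hmem y hy)
    by_cases h1 : y = ω₁
    · exact Or.inl h1
    by_cases h2 : y = ω₂
    · exact Or.inr (Or.inl h2)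
    by_cases h3 : y = ω₃
    · exact Or.inr (Or.inr h3.ge)
    exact Or.inr (Or.inr (this h1 h2 h3).le)
  obtain ⟨p, hp⟩ := Multiset.card_pos_iff_exists_mem.1 (by omega : 0 < Multiset.card L)
  obtain ⟨t, rfl⟩ := Multiset.exists_cons_of_mem hp
  rw [Multiset.card_cons] at hL
  obtain ⟨q, hq⟩ := Multiset.card_pos_iff_exists_mem.1 (by omega : 0 < Multiset.card t)
  have hpq : p ≠ q := by
    rintro rfl
    exact (Multiset.nodup_cons.1 hLn).1 hq
  have hq' : q ∈ p ::ₘ t := Multiset.mem_cons_of_mem hq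
  obtain ⟨r, hr⟩ := Multiset.card_pos_iff_exists_mem.1 (by omega : 0 < Multiset.card R)
  have hl := (mmin_spec _ p hp).1
  have hr := (mmin_spec _ r hr).1
  generalize mmin R = r at *
  generalize mmin (p ::ₘ t) = l at *
  have hpr : p < r := lt_of_le_of_ne (ho p hp r hr)
    (fun e => Multiset.disjoint_left.1 hdis hp (e ▸ hr))
  have hqr : q < r := lt_of_le_of_ne (ho q hq' r hr)
    (fun e => Multiset.disjoint_left.1 hdis hq' (e ▸ hr))
  have c1 := hcase l (Or.inl hl)
  have c2 := hcase r (Or.inr hr)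
  have c3 := hcase p (Or.inl hp)
  have c4 := hcase q (Or.inl hq')
  clear hcase hmem h ho
  grind

/-- The quadrangle inequality does not imply ordered minimizability:
the cost `C_min(X) = min(X)` satisfies the quadrangle inequality (with equality)
on sorted data, yet for every finite set `Ω` of at least 4 nonnegative reals with
three smallest elements `ω₁ < ω₂ < ω₃`, the bipartition `A = {ω₁, ω₃}`,
`B = Ω \ A` has total cost `ω₁ + ω₂`, while every pairwise ordered bipartition
`{L, R}` of `Ω` with `min(|L|,|R|) ≥ 2` has total cost at least `ω₁ + ω₃ > ω₁ + ω₂`. -/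
theorem quadrangle_does_not_imply_ordered_minimizable :
    (∀ (n : ℕ) (x : ℕ → ℝ), (∀ l m : ℕ, 1 ≤ l → l ≤ m → m ≤ n → x l ≤ x m) →
      ∀ a b c d : ℕ, a < b → b < c → c < d → d ≤ n →
        mmin (intervalMS x a c) + mmin (intervalMS x b d) =
          mmin (intervalMS x a d) + mmin (intervalMS x b c)) ∧
    (∀ (Ω : Finset ℝ), 4 ≤ Ω.card → (∀ y ∈ Ω, 0 ≤ y) →
      ∀ ω₁ ω₂ ω₃ : ℝ, ω₁ ∈ Ω → ω₂ ∈ Ω → ω₃ ∈ Ω → ω₁ < ω₂ → ω₂ < ω₃ →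
        (∀ y ∈ Ω, y ≠ ω₁ → y ≠ ω₂ → y ≠ ω₃ → ω₃ < y) →
        (mmin ({ω₁, ω₃} : Multiset ℝ) + mmin (Ω.val - {ω₁, ω₃}) = ω₁ + ω₂) ∧
        (∀ L R : Multiset ℝ, L + R = Ω.val →
          2 ≤ Multiset.card L → 2 ≤ Multiset.card R → PairwiseOrdered L R →
          ω₁ + ω₃ ≤ mmin L + mmin R) ∧
        ω₁ + ω₂ < ω₁ + ω₃) := by
  refine ⟨?_, ?_⟩
  · intro n x hx a b c d hab hbc hcd hd
    have key : ∀ i j : ℕ, i < j → j ≤ n → mmin (intervalMS x i j) = x (i + 1) := by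
      intro i j hij hj
      apply mmin_eq_of
      · exact Multiset.mem_map_of_mem x (show i + 1 ∈ Finset.Ioc i j from Finset.mem_Ioc.2 ⟨by omega, by omega⟩)
      · intro y hy
        obtain ⟨k, hk, rfl⟩ := Multiset.mem_map.1 hy
        have hk := Finset.mem_Ioc.1 (show k ∈ Finset.Ioc i j from hk)
        exact hx _ _ (by omega) (by omega) (by omega)
    rw [key a c (by omega) (by omega), key b d (by omega) (by omega),
      key a d (by omega) (by omega), key b c (by omega) (by omega)]
  · intro Ω hc h0 ω₁ ω₂ ω₃ m1 m2 m3 h12 h23 h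
    refine ⟨?_, ?_, by linarith⟩
    · rw [mmin_eq_of {ω₁, ω₃} ω₁ (by simp) (by simp; linarith), mmin_eq_of _ ω₂]
      · rw [Multiset.mem_sub_of_nodup Ω.nodup]
        refine ⟨m2, ?_⟩
        simp [h12.ne', h23.ne]
      · intro y hy
        rw [Multiset.mem_sub_of_nodup Ω.nodup] at hy
        obtain ⟨hy, hy'⟩ := hy
        simp at hy'
        by_cases h2 : y = ω₂
        · exact h2.ge
        · exact (h23.trans (h y hy hy'.1 h2 hy'.2)).le
    · intro L R hLR hL hR ho
      rcases ho with ho | ho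
      · exact ordered_cost Ω ω₁ ω₂ ω₃ h12 h23 h L R hLR hL hR ho
      · rw [add_comm (mmin L)]
        exact ordered_cost Ω ω₁ ω₂ ω₃ h12 h23 h R L (by rw [add_comm, hLR]) hR hL
          (fun a ha b hb => ho b hb a ha)
end
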